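/- arXiv:0805.3842 — 3 statements merged into one kernel-verified Lean document; each statement's English description precedes it below -/
import Mathlib

section
/- Let (X, Σ, μ) be a finite measure space and let u : X → ℝ be a measurable function that is bounded from above. Then there exists a weight χ : ℝ → ℝ (that is, χ is convex, monotone nondecreasing, χ(0) = 0, and χ(t) → −∞ as t → −∞) such that the composition χ ∘ u is μ-integrable. -/
theorem exists_seq_aux
    {X : Type*} [MeasurableSpace X] (μ : MeasureTheory.Measure X)
    [MeasureTheory.IsFiniteMeasure μ]
    (u : X → ℝ) (hu : Measurable u) (hbdd : BddAbove (Set.range u)) (n : ℕ) :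
    ∃ b : ℝ, 0 < b ∧ b ≤ (1/2)^n ∧
      ∫⁻ x, ‖max (u x * b) (-1)‖ₑ ∂μ ≤ ENNReal.ofReal ((1/2)^n) := by
  obtain ⟨M, hM⟩ := hbdd
  have hM' : ∀ x, u x ≤ M := fun x => hM ⟨x, rfl⟩
  have hb := tendsto_one_div_add_atTop_nhds_zero_nat (𝕜 := ℝ)
  have key : Filter.Tendsto (fun k : ℕ => ∫⁻ x, ‖max (u x * (1 / ((k:ℝ) + 1))) (-1)‖ₑ ∂μ)
      Filter.atTop (nhds (∫⁻ x, 0 ∂μ)) := by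
    apply MeasureTheory.tendsto_lintegral_of_dominated_convergence
      (fun _ => ENNReal.ofReal (max 1 |M|))
    · intro k
      fun_prop
    · intro k
      refine Filter.Eventually.of_forall fun x => ?_
      dsimp only
      rw [← ofReal_norm_eq_enorm]
      apply ENNReal.ofReal_le_ofReal
      rw [Real.norm_eq_abs, abs_le]
      have h0 : (0:ℝ) < 1 / ((k:ℝ) + 1) := by positivity
      have h1 : 1 / ((k:ℝ) + 1) ≤ 1 := by
        rw [div_le_one (by positivity)]; linarith [(Nat.cast_nonneg k : (0:ℝ) ≤ k)]
      constructor
      · have := le_max_left 1 |M|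
        have := le_max_right (u x * (1 / ((k:ℝ) + 1))) (-1)
        linarith
      · apply max_le
        · refine le_trans ?_ (le_max_right _ _)
          have := le_abs_self M
          have := hM' x
          have := abs_nonneg M
          nlinarith
        · linarith [le_max_left 1 |M|]
    · rw [MeasureTheory.lintegral_const]
      exact ENNReal.mul_ne_top ENNReal.ofReal_ne_top (MeasureTheory.measure_ne_top _ _)
    · refine Filter.Eventually.of_forall fun x => ?_
      have h := ((hb.const_mul (u x)).max (tendsto_const_nhds (x := (-1:ℝ)))).enorm
      simpa using h
  rw [MeasureTheory.lintegral_zero] at key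
  have hp : (0:ℝ) < (1/2)^n := by positivity
  have e1 := key.eventually (Iio_mem_nhds (ENNReal.ofReal_pos.2 hp))
  have e2 := hb.eventually (Iio_mem_nhds hp)
  obtain ⟨k, h1, h2⟩ := (e1.and e2).exists
  exact ⟨1 / ((k:ℝ) + 1), by positivity, le_of_lt h2, le_of_lt h1⟩

/-- Lemma 1.3 ("basicweight"): on a finite measure space, for any measurable
real-valued function `u` bounded from above, there is a weight `χ`
(convex, monotone nondecreasing, `χ 0 = 0`, tending to `-∞` at `-∞`)
such that `χ ∘ u` is integrable. -/
theorem exists_weight_integrable_comp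
    {X : Type*} [MeasurableSpace X] (μ : MeasureTheory.Measure X)
    [MeasureTheory.IsFiniteMeasure μ]
    (u : X → ℝ) (hu : Measurable u) (hbdd : BddAbove (Set.range u)) :
    ∃ χ : ℝ → ℝ,
      ConvexOn ℝ Set.univ χ ∧ Monotone χ ∧ χ 0 = 0 ∧
      Filter.Tendsto χ Filter.atBot Filter.atBot ∧
      MeasureTheory.Integrable (fun x => χ (u x)) μ := by
  choose b hb0 hb1 hb2 using exists_seq_aux μ u hu hbdd
  have hg : Summable (fun n : ℕ => ((1:ℝ)/2)^n) := summable_geometric_two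
  have hs : ∀ t : ℝ, Summable (fun n => max (t * b n) (-1)) := by
    intro t
    apply Summable.of_norm_bounded (hg.mul_left |t|)
    intro n
    have h0 := hb0 n
    have h1 : |t * b n| ≤ |t| * (1/2)^n := by
      rw [abs_mul, abs_of_pos h0]
      exact mul_le_mul_of_nonneg_left (hb1 n) (abs_nonneg t)
    have h2 := abs_le.1 h1
    rw [Real.norm_eq_abs, abs_le]
    refine ⟨h2.1.trans' ?_ |>.trans (le_max_left _ _), max_le h2.2 ?_⟩
    · exact le_rfl
    · have : 0 ≤ |t| * (1/2:ℝ)^n := by positivity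
      linarith
  have hmono : Monotone (fun t : ℝ => ∑' n, max (t * b n) (-1)) := by
    intro s t hst
    refine (hs s).tsum_le_tsum (fun n => ?_) (hs t)
    exact max_le_max (mul_le_mul_of_nonneg_right hst (hb0 n).le) le_rfl
  refine ⟨fun t => ∑' n, max (t * b n) (-1), ⟨convex_univ, ?_⟩, hmono, ?_, ?_, ?_⟩
  · intro s _ t _ p q hp hq hpq
    simp only [smul_eq_mul]
    rw [← tsum_mul_left, ← tsum_mul_left, ← ((hs s).mul_left p).tsum_add ((hs t).mul_left q)]
    refine (hs _).tsum_le_tsum (fun n => ?_) (((hs s).mul_left p).add ((hs t).mul_left q))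
    have a1 := mul_le_mul_of_nonneg_left (le_max_left (s * b n) (-1)) hp
    have a2 := mul_le_mul_of_nonneg_left (le_max_right (s * b n) (-1)) hp
    have a3 := mul_le_mul_of_nonneg_left (le_max_left (t * b n) (-1)) hq
    have a4 := mul_le_mul_of_nonneg_left (le_max_right (t * b n) (-1)) hq
    apply max_le <;> nlinarith
  · simp
  · rw [Filter.tendsto_atBot]
    intro C
    obtain ⟨N, hN⟩ := exists_nat_ge (-C)
    have hev : ∀ᶠ t : ℝ in Filter.atBot, ∀ n ∈ Finset.range N, t * b n ≤ -1 := by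
      rw [Filter.eventually_all_finset]
      intro n _
      filter_upwards [Filter.eventually_le_atBot (-1 / b n)] with t ht
      rwa [le_div_iff₀ (hb0 n)] at ht
    filter_upwards [hev, Filter.eventually_le_atBot (0:ℝ)] with t ht ht0
    have h1 : ∑' n, -max (t * b n) (-1) = -∑' n, max (t * b n) (-1) := tsum_neg
    have h2 := (hs t).neg.sum_le_tsum (Finset.range N) (fun n _ => by
      have : t * b n ≤ 0 := mul_nonpos_of_nonpos_of_nonneg ht0 (hb0 n).le
      have : max (t * b n) (-1) ≤ 0 := max_le this (by norm_num)
      linarith)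
    have h3 : ∑ n ∈ Finset.range N, -max (t * b n) (-1) = N := by
      rw [Finset.sum_congr rfl (g := fun _ => (1:ℝ))]
      · simp
      · intro n hn
        rw [max_eq_right (ht n hn)]; norm_num
    linarith
  · refine ⟨(hmono.measurable.comp hu).aestronglyMeasurable, ?_⟩
    rw [MeasureTheory.hasFiniteIntegral_iff_enorm]
    calc ∫⁻ x, ‖∑' n, max (u x * b n) (-1)‖ₑ ∂μ
        ≤ ∫⁻ x, ∑' n, ‖max (u x * b n) (-1)‖ₑ ∂μ :=
          MeasureTheory.lintegral_mono fun x => enorm_tsum_le_tsum_enorm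
      _ = ∑' n, ∫⁻ x, ‖max (u x * b n) (-1)‖ₑ ∂μ :=
          MeasureTheory.lintegral_tsum fun n => by fun_prop
      _ ≤ ∑' n : ℕ, ENNReal.ofReal ((1/2)^n) := ENNReal.tsum_le_tsum hb2
      _ < ⊤ := by
          rw [← ENNReal.ofReal_tsum_of_nonneg (fun n => by positivity) hg]
          exact ENNReal.ofReal_lt_top
end

section
/- For parameters a, b, c ∈ ℂ define F_{a,b,c} : ℂ³ → ℂ³ by F_{a,b,c}(x, y, z) = (bcx(−cx + acy + z), acy(x − ay + abz), abz(bcx + y − bz)). Then for all nonzero a, b, c ∈ ℂ and every v ∈ ℂ³ there exists t ∈ ℂ such that F_{a⁻¹, b⁻¹, c⁻¹}(F_{a,b,c}(v)) = t • v; moreover there exists some v ∈ ℂ³ with F_{a⁻¹, b⁻¹, c⁻¹}(F_{a,b,c}(v)) ≠ 0. (Projectively this says: the birational map f_{abc} of ℙ² is invertible with inverse f_{a⁻¹b⁻¹c⁻¹}.) -/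
/-- Homogeneous lift of the birational map `f_{abc}` of `ℙ²`. -/
def Fabc (a b c : ℂ) : ℂ × ℂ × ℂ → ℂ × ℂ × ℂ := fun v =>
  (b * c * v.1 * (-c * v.1 + a * c * v.2.1 + v.2.2),
   a * c * v.2.1 * (v.1 - a * v.2.1 + a * b * v.2.2),
   a * b * v.2.2 * (b * c * v.1 + v.2.1 - b * v.2.2))

/-- `f_{abc}` is birational with inverse `f_{a⁻¹b⁻¹c⁻¹}`: the composition of
the homogeneous lifts is a scalar multiple of the identity, not identically
zero. -/
theorem Fabc_inv_comp (a b c : ℂ) (ha : a ≠ 0) (hb : b ≠ 0) (hc : c ≠ 0) :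
    (∀ v : ℂ × ℂ × ℂ, ∃ t : ℂ, Fabc a⁻¹ b⁻¹ c⁻¹ (Fabc a b c v) = t • v) ∧
    ∃ v : ℂ × ℂ × ℂ, Fabc a⁻¹ b⁻¹ c⁻¹ (Fabc a b c v) ≠ 0 := by
  constructor
  · rintro ⟨x, y, z⟩
    refine ⟨(-c * x + a * c * y + z) * (x - a * y + a * b * z) * (b * c * x + y - b * z), ?_⟩
    simp only [Fabc, Prod.smul_mk, smul_eq_mul, Prod.mk.injEq]
    refine ⟨?_, ?_, ?_⟩ <;> field_simp <;> ring
  · refine ⟨(1, 0, 0), fun h => ?_⟩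
    have h1 := congrArg Prod.fst h
    simp [Fabc, ha, hb, hc] at h1
end

section
/- For parameters a, b, c ∈ ℂ define F_{a,b,c} : ℂ³ → ℂ³ by F_{a,b,c}(x, y, z) = (bcx(−cx + acy + z), acy(x − ay + abz), abz(bcx + y − bz)). Let a, b, c ∈ ℂ be nonzero with abc ≠ −1. Then for every nonzero v ∈ ℂ³ one has F_{a,b,c}(v) = 0 if and only if there exists a nonzero t ∈ ℂ with v = t • (a, 1, 0) or v = t • (0, b, 1) or v = t • (1, 0, c). (Projectively: the indeterminacy set of f_{abc} is exactly {[a:1:0], [0:b:1], [1:0:c]}.) -/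
/-- The indeterminacy set of `f_{abc}` is exactly
`{[a:1:0], [0:b:1], [1:0:c]}`. -/
theorem Fabc_indeterminacy (a b c : ℂ) (ha : a ≠ 0) (hb : b ≠ 0) (hc : c ≠ 0)
    (habc : a * b * c ≠ -1) :
    ∀ v : ℂ × ℂ × ℂ, v ≠ 0 →
      (Fabc a b c v = 0 ↔
        ∃ t : ℂ, t ≠ 0 ∧
          (v = t • ((a : ℂ), (1 : ℂ), (0 : ℂ)) ∨
           v = t • ((0 : ℂ), b, (1 : ℂ)) ∨
           v = t • ((1 : ℂ), (0 : ℂ), c))) := by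
  rintro ⟨x, y, z⟩ hv
  have hk : 1 + a * b * c ≠ 0 := fun h => habc (by linear_combination h)
  have hv' : ¬ (x = 0 ∧ y = 0 ∧ z = 0) := by
    rintro ⟨rfl, rfl, rfl⟩
    exact hv rfl
  simp only [Fabc, Prod.mk_eq_zero, Prod.smul_mk, Prod.mk.injEq, smul_eq_mul, mul_zero, mul_one,
    mul_eq_zero, ha, hb, hc, false_or]
  constructor
  · rintro ⟨h1, h2, h3⟩
    have h0 : x = 0 ∨ y = 0 ∨ z = 0 := by
      rcases h1 with h1 | h1
      · exact Or.inl h1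
      rcases h2 with h2 | h2
      · exact Or.inr (Or.inl h2)
      refine Or.inr (Or.inr ?_)
      have : (1 + a * b * c) * z = 0 := by linear_combination h1 + c * h2
      exact (mul_eq_zero.mp this).resolve_left hk
    rcases h0 with h | h | h
    · subst h
      have hyz : y = b * z := by
        rcases h3 with h3 | h3
        · subst h3
          rcases h2 with h2 | h2
          · simp [h2]
          · have : a * y = 0 := by linear_combination -h2
            simpa [ha] using this
        · linear_combination h3
      refine ⟨z, fun hz => hv' ⟨rfl, by simp [hyz, hz], hz⟩, Or.inr (Or.inl ⟨rfl, ?_, rfl⟩)⟩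
      linear_combination hyz
    · subst h
      have hzx : z = c * x := by
        rcases h1 with h1 | h1
        · subst h1
          rcases h3 with h3 | h3
          · simp [h3]
          · have : b * z = 0 := by linear_combination -h3
            simpa [hb] using this
        · linear_combination h1
      refine ⟨x, fun hx => hv' ⟨hx, rfl, by simp [hzx, hx]⟩, Or.inr (Or.inr ⟨rfl, rfl, ?_⟩)⟩
      linear_combination hzx
    · subst h
      have hxy : x = a * y := by
        rcases h2 with h2 | h2
        · subst h2
          rcases h1 with h1 | h1
          · simp [h1]
          · have : c * x = 0 := by linear_combination -h1
            simpa [hc] using this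
        · linear_combination h2
      refine ⟨y, fun hy => hv' ⟨by simp [hxy, hy], hy, rfl⟩, Or.inl ⟨?_, rfl, rfl⟩⟩
      linear_combination hxy
  · rintro ⟨t, ht, ⟨rfl, rfl, rfl⟩ | ⟨rfl, rfl, rfl⟩ | ⟨rfl, rfl, rfl⟩⟩
    · exact ⟨Or.inr (by ring), Or.inr (by ring), Or.inl rfl⟩
    · exact ⟨Or.inl rfl, Or.inr (by ring), Or.inr (by ring)⟩
    · exact ⟨Or.inr (by ring), Or.inl rfl, Or.inr (by ring)⟩
end
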